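/- For all integers L, i, j, k with i, j, k ≥ 0 and L ≥ i + j + k, the identity \sum_{τ ≥ 0} q^{τ(L+2) - T_τ + T_{i-τ} + T_{j-τ} + T_{k-τ}} [L-τ; τ] [L-2τ; i-τ] [L-i-τ; j-τ] [L-i-j; k-τ] = q^{T_i + T_j + T_k} [L-k; i] [L-i; j] [L-j; k] holds as an identity of polynomials in q, where [m; r] denotes the Gaussian binomial coefficient and the sum on the left runs over 0 ≤ τ ≤ min(i, j, k). -/

import Mathlib

open Finset

/-- `(q)_n = (q;q)_n = ∏_{t=0}^{n-1} (1 - q^{t+1})` in `ℚ(q)`. -/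
noncomputable def qPoch (n : ℕ) : RatFunc ℚ :=
  ∏ t ∈ Finset.range n, (1 - (RatFunc.X : RatFunc ℚ) ^ (t + 1))

/-- The Gaussian (q-)binomial coefficient `[m; r] = (q)_m / ((q)_r (q)_{m-r})` for
`0 ≤ r ≤ m`, and `0` otherwise. -/
noncomputable def qbin (m r : ℤ) : RatFunc ℚ :=
  if 0 ≤ r ∧ r ≤ m then qPoch m.toNat / (qPoch r.toNat * qPoch (m - r).toNat) else 0

/-- `T n = n(n+1)/2`, the n-th triangular number (on `ℤ`, the division is exact). -/
def triZ (n : ℤ) : ℤ := n * (n + 1) / 2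

/-!
With `N = L - i - j - k` the product of the four Gaussian binomials on the left telescopes, and the
identity becomes the q-Pfaff–Saalschütz sum
`∑ τ, q ^ (τ (N + τ)) (q)_{N+i+j+k-τ} / ((q)_τ (q)_{i-τ} (q)_{j-τ} (q)_{k-τ} (q)_{N+τ})
  = (q)_{N+i+j} (q)_{N+j+k} (q)_{N+i+k} /
      ((q)_i (q)_j (q)_k (q)_{N+i} (q)_{N+j} (q)_{N+k})`.
For `N ≥ 0` this follows by induction on `k`: creative telescoping (q-Zeilberger) gives a
first-order recurrence in `k` for the sum. The case `N < 0` reduces to `N > 0` because the summand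
is invariant under `(N, i, j, k, τ) ↦ (-N, i + N, j + N, k + N, τ + N)`. With the convention
`1 / (q)_n = 0` for `n < 0` the range of `τ` takes care of itself, so all sums run over `ℤ`.
-/

theorem not_isOfFinOrder_of_transcendental {R A : Type*} [CommRing R] [Nontrivial R] [Ring A]
    [Algebra R A] {x : A} (hx : Transcendental R x) : ¬ IsOfFinOrder x := by
  rw [isOfFinOrder_iff_pow_eq_one]
  rintro ⟨n, hn, hxn⟩
  exact hx.pow hn (hxn ▸ isAlgebraic_one)

theorem not_isOfFinOrder_ratFunc_X {R : Type*} [CommRing R] [IsDomain R] :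
    ¬ IsOfFinOrder (RatFunc.X : RatFunc R) :=
  not_isOfFinOrder_of_transcendental RatFunc.transcendental_X

theorem finsum_sub_add_one_eq_zero {M : Type*} [AddCommGroup M] {f : ℤ → M}
    (hf : f.HasFiniteSupport) : ∑ᶠ n, (f n - f (n + 1)) = 0 := by
  have hf' : (fun n ↦ f (n + 1)).HasFiniteSupport :=
    hf.preimage (add_left_injective 1).injOn
  have hshift : ∑ᶠ n, f (n + 1) = ∑ᶠ n, f n := finsum_comp_equiv (Equiv.addRight (1 : ℤ))
  rw [finsum_sub_distrib hf hf', hshift, sub_self]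

variable {K : Type*} [Field K] {q : K}

section qPochhammer

/-- The q-Pochhammer symbol `(q)_n = (q; q)_n` at an element `q` of a field. It is indexed by `ℤ`,
with value `1` for `n < 0`. -/
def qPochhammer (q : K) (n : ℤ) : K :=
  ∏ t ∈ range n.toNat, (1 - q ^ (t + 1))

/-- The reciprocal `1 / (q)_n`, with the usual convention that it vanishes for `n < 0`. -/
noncomputable def qPochhammerInv (q : K) (n : ℤ) : K :=
  if 0 ≤ n then (qPochhammer q n)⁻¹ else 0

/-- The Gaussian binomial coefficient `[m; r]` at an element `q` of a field, zero unless
`0 ≤ r ≤ m`. For `q` the variable of `ℚ(q)` this is `qbin`. -/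
noncomputable def gaussBinom (q : K) (m r : ℤ) : K :=
  if 0 ≤ r ∧ r ≤ m then qPochhammer q m / (qPochhammer q r * qPochhammer q (m - r)) else 0

theorem one_sub_zpow_ne_zero (hq : ¬ IsOfFinOrder q) {n : ℤ} (hn : n ≠ 0) : 1 - q ^ n ≠ 0 := by
  intro h
  have hqn : q ^ n = 1 := (sub_eq_zero.1 h).symm
  refine hq (isOfFinOrder_iff_pow_eq_one.2 ⟨n.natAbs, Int.natAbs_pos.2 hn, ?_⟩)
  cases n <;> simpa using hqn

theorem qPochhammer_zero : qPochhammer q 0 = 1 := by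
  simp [qPochhammer]

theorem qPochhammer_add_one {n : ℤ} (hn : 0 ≤ n) :
    qPochhammer q (n + 1) = (1 - q ^ (n + 1)) * qPochhammer q n := by
  lift n to ℕ using hn
  rw [qPochhammer, Int.toNat_natCast_add_one, prod_range_succ, mul_comm]
  norm_cast

theorem qPochhammer_ne_zero (hq : ¬ IsOfFinOrder q) (n : ℤ) : qPochhammer q n ≠ 0 :=
  prod_ne_zero_iff.2 fun t _ ↦ mod_cast one_sub_zpow_ne_zero hq (n := t + 1) (by omega)

theorem qPochhammerInv_of_nonneg {n : ℤ} (hn : 0 ≤ n) :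
    qPochhammerInv q n = (qPochhammer q n)⁻¹ :=
  if_pos hn

theorem qPochhammerInv_of_neg {n : ℤ} (hn : n < 0) : qPochhammerInv q n = 0 :=
  if_neg hn.not_ge

theorem qPochhammerInv_zero : qPochhammerInv q 0 = 1 := by
  rw [qPochhammerInv_of_nonneg le_rfl, qPochhammer_zero, inv_one]

theorem qPochhammerInv_sub_one (hq : ¬ IsOfFinOrder q) (n : ℤ) :
    qPochhammerInv q (n - 1) = (1 - q ^ n) * qPochhammerInv q n := by
  rcases lt_trichotomy n 0 with hn | rfl | hn
  · rw [qPochhammerInv_of_neg hn, qPochhammerInv_of_neg (by omega), mul_zero]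
  · rw [qPochhammerInv_of_neg (by omega), zpow_zero, sub_self, zero_mul]
  · have hfac := qPochhammer_add_one (q := q) (n := n - 1) (by omega)
    rw [sub_add_cancel] at hfac
    rw [qPochhammerInv_of_nonneg hn.le, qPochhammerInv_of_nonneg (by omega), hfac, mul_inv,
      mul_inv_cancel_left₀ (one_sub_zpow_ne_zero hq hn.ne')]

theorem gaussBinom_eq_mul_qPochhammerInv (m r : ℤ) :
    gaussBinom q m r = qPochhammer q m * qPochhammerInv q r * qPochhammerInv q (m - r) := by
  by_cases h : 0 ≤ r ∧ r ≤ m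
  · rw [gaussBinom, if_pos h, qPochhammerInv_of_nonneg h.1,
      qPochhammerInv_of_nonneg (sub_nonneg.2 h.2), div_eq_mul_inv, mul_inv, mul_assoc]
  · rw [gaussBinom, if_neg h]
    rcases not_and_or.1 h with hr | hr
    · rw [qPochhammerInv_of_neg (not_le.1 hr), mul_zero, zero_mul]
    · rw [qPochhammerInv_of_neg (n := m - r) (by omega), mul_zero]

theorem qPochhammerInv_mul_gaussBinom (hq : ¬ IsOfFinOrder q) (m r : ℤ) :
    qPochhammerInv q m * gaussBinom q m r = qPochhammerInv q r * qPochhammerInv q (m - r) := by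
  rw [gaussBinom_eq_mul_qPochhammerInv]
  by_cases hm : 0 ≤ m
  · rw [qPochhammerInv_of_nonneg hm, mul_assoc, inv_mul_cancel_left₀ (qPochhammer_ne_zero hq m)]
  · have hvanish : qPochhammerInv q r * qPochhammerInv q (m - r) = 0 := by
      by_cases hr : 0 ≤ r
      · rw [qPochhammerInv_of_neg (n := m - r) (by omega), mul_zero]
      · rw [qPochhammerInv_of_neg (not_le.1 hr), zero_mul]
    rw [mul_assoc, hvanish, mul_zero, mul_zero]

theorem gaussBinom_eq_zero {m r : ℤ} (h : r < 0 ∨ m < r) : gaussBinom q m r = 0 :=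
  if_neg (by omega)

theorem gaussBinom_zero_right (hq : ¬ IsOfFinOrder q) {m : ℤ} (hm : 0 ≤ m) :
    gaussBinom q m 0 = 1 := by
  rw [gaussBinom_eq_mul_qPochhammerInv, sub_zero, qPochhammerInv_zero, mul_one,
    qPochhammerInv_of_nonneg hm, mul_inv_cancel₀ (qPochhammer_ne_zero hq m)]

theorem one_sub_zpow_mul_gaussBinom_add_one_left (hq : ¬ IsOfFinOrder q) {m : ℤ} (hm : 0 ≤ m)
    (r : ℤ) :
    (1 - q ^ (m + 1 - r)) * gaussBinom q (m + 1) r = (1 - q ^ (m + 1)) * gaussBinom q m r := by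
  have hinv := qPochhammerInv_sub_one hq (m + 1 - r)
  rw [show m + 1 - r - 1 = m - r by ring] at hinv
  rw [gaussBinom_eq_mul_qPochhammerInv, gaussBinom_eq_mul_qPochhammerInv, qPochhammer_add_one hm,
    hinv]
  ring

theorem one_sub_zpow_mul_gaussBinom_add_one_add_one (hq : ¬ IsOfFinOrder q) {m : ℤ} (hm : 0 ≤ m)
    (r : ℤ) :
    (1 - q ^ (r + 1)) * gaussBinom q (m + 1) (r + 1) = (1 - q ^ (m + 1)) * gaussBinom q m r := by
  have hinv := qPochhammerInv_sub_one hq (r + 1)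
  rw [add_sub_cancel_right] at hinv
  rw [gaussBinom_eq_mul_qPochhammerInv, gaussBinom_eq_mul_qPochhammerInv, qPochhammer_add_one hm,
    add_sub_add_right_eq_sub, hinv]
  ring

end qPochhammer

section Saalschutz

/-- The summand of the q-Pfaff–Saalschütz sum, in the form symmetric in `i, j, k`. -/
noncomputable def saalschutzTerm (q : K) (N i j k τ : ℤ) : K :=
  q ^ (τ * (N + τ)) * qPochhammer q (N + i + j + k - τ) * qPochhammerInv q τ *
    qPochhammerInv q (i - τ) * qPochhammerInv q (j - τ) * qPochhammerInv q (k - τ) *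
    qPochhammerInv q (N + τ)

/-- The q-Zeilberger companion of `saalschutzTerm`: its differences in `τ` are the defect of the
recurrence in `k`. -/
noncomputable def saalschutzCompanion (q : K) (N i j k τ : ℤ) : K :=
  q ^ (k + 1 - τ + τ * (N + τ)) * qPochhammer q (N + i + j + k + 1 - τ) *
    qPochhammerInv q (τ - 1) * qPochhammerInv q (i - τ) * qPochhammerInv q (j - τ) *
    qPochhammerInv q (k + 1 - τ) * qPochhammerInv q (N + τ - 1)

/-- The closed form of the q-Pfaff–Saalschütz sum. -/
noncomputable def saalschutzProduct (q : K) (N i j k : ℤ) : K :=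
  gaussBinom q (N + i + j) i * gaussBinom q (N + j + k) j * gaussBinom q (N + i + k) k

theorem saalschutzTerm_eq_zero {N i j k τ : ℤ}
    (h : τ < 0 ∨ i < τ ∨ j < τ ∨ k < τ ∨ N + τ < 0) : saalschutzTerm q N i j k τ = 0 := by
  unfold saalschutzTerm
  rcases h with h | h | h | h | h
  · simp [qPochhammerInv_of_neg h]
  · simp [qPochhammerInv_of_neg (sub_neg.2 h)]
  · simp [qPochhammerInv_of_neg (sub_neg.2 h)]
  · simp [qPochhammerInv_of_neg (sub_neg.2 h)]
  · simp [qPochhammerInv_of_neg h]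

theorem saalschutzCompanion_eq_zero {N i j k τ : ℤ}
    (h : τ < 1 ∨ i < τ ∨ j < τ ∨ N + τ < 1) : saalschutzCompanion q N i j k τ = 0 := by
  unfold saalschutzCompanion
  rcases h with h | h | h | h <;> simp [qPochhammerInv_of_neg (sub_neg.2 h)]

theorem support_saalschutzTerm_subset (N i j k : ℤ) :
    Function.support (saalschutzTerm q N i j k) ⊆ Icc 0 (min i (min j k)) := by
  intro τ hτ
  rw [coe_Icc, Set.mem_Icc]
  by_contra hrange
  exact hτ (saalschutzTerm_eq_zero (by omega))

theorem hasFiniteSupport_saalschutzTerm (N i j k : ℤ) :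
    (saalschutzTerm q N i j k).HasFiniteSupport :=
  (finite_toSet _).subset (support_saalschutzTerm_subset N i j k)

theorem hasFiniteSupport_saalschutzCompanion (N i j k : ℤ) :
    (saalschutzCompanion q N i j k).HasFiniteSupport := by
  refine (Set.finite_Icc 1 i).subset fun τ hτ ↦ ?_
  by_contra hrange
  rw [Set.mem_Icc] at hrange
  exact hτ (saalschutzCompanion_eq_zero (by omega))

theorem saalschutzTerm_neg (N i j k τ : ℤ) :
    saalschutzTerm q (-N) (i + N) (j + N) (k + N) (τ + N) = saalschutzTerm q N i j k τ := by
  unfold saalschutzTerm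
  rw [show (τ + N) * (-N + (τ + N)) = τ * (N + τ) by ring,
    show -N + (i + N) + (j + N) + (k + N) - (τ + N) = N + i + j + k - τ by ring,
    show -N + (τ + N) = τ by ring, add_sub_add_right_eq_sub, add_sub_add_right_eq_sub,
    add_sub_add_right_eq_sub, add_comm τ N]
  ring

theorem finsum_saalschutzTerm_neg (N i j k : ℤ) :
    ∑ᶠ τ, saalschutzTerm q (-N) (i + N) (j + N) (k + N) τ = ∑ᶠ τ, saalschutzTerm q N i j k τ := by
  rw [← finsum_comp_equiv (Equiv.addRight N)]
  exact finsum_congr (saalschutzTerm_neg N i j k)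

theorem saalschutz_factor_identity (hq₀ : q ≠ 0) (N i j k τ : ℤ) :
    (1 - q ^ (k + 1)) * (1 - q ^ (N + k + 1)) * (1 - q ^ (N + i + j + k - τ + 1)) -
      (1 - q ^ (N + j + k + 1)) * (1 - q ^ (N + i + k + 1)) * (1 - q ^ (k + 1 - τ)) =
    q ^ (k + 1 - τ) * (1 - q ^ τ) * (1 - q ^ (N + τ)) * (1 - q ^ (N + i + j + k - τ + 1)) -
      q ^ (N + k + τ + 1) * (1 - q ^ (i - τ)) * (1 - q ^ (j - τ)) * (1 - q ^ (k + 1 - τ)) := by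
  simp only [zpow_add₀ hq₀, zpow_sub₀ hq₀, zpow_one]
  field_simp
  ring

theorem saalschutzTerm_recurrence (hq₀ : q ≠ 0) (hq : ¬ IsOfFinOrder q) {N i j k : ℤ} (hk : 0 ≤ k)
    (τ : ℤ) :
    (1 - q ^ (k + 1)) * (1 - q ^ (N + k + 1)) * saalschutzTerm q N i j (k + 1) τ -
      (1 - q ^ (N + j + k + 1)) * (1 - q ^ (N + i + k + 1)) * saalschutzTerm q N i j k τ =
    saalschutzCompanion q N i j k τ - saalschutzCompanion q N i j k (τ + 1) := by
  by_cases hτ : N + i + j + k - τ < 0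
  · -- The sum of `N + τ`, `i - τ`, `j - τ` is negative, so one of them is and all terms vanish.
    rw [saalschutzTerm_eq_zero (by omega), saalschutzTerm_eq_zero (by omega),
      saalschutzCompanion_eq_zero (by omega), saalschutzCompanion_eq_zero (by omega)]
    ring
  · unfold saalschutzTerm saalschutzCompanion
    rw [show N + i + j + (k + 1) - τ = N + i + j + k - τ + 1 by ring,
      show N + i + j + k + 1 - τ = N + i + j + k - τ + 1 by ring,
      show N + i + j + k + 1 - (τ + 1) = N + i + j + k - τ by ring,
      show k + 1 - (τ + 1) = k + 1 - τ - 1 by ring, show k - τ = k + 1 - τ - 1 by ring,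
      show N + (τ + 1) - 1 = N + τ by ring, show i - (τ + 1) = i - τ - 1 by ring,
      show j - (τ + 1) = j - τ - 1 by ring, add_sub_cancel_right τ 1,
      show k + 1 - τ - 1 + (τ + 1) * (N + (τ + 1)) = N + k + τ + 1 + τ * (N + τ) by ring,
      qPochhammer_add_one (not_lt.1 hτ)]
    simp only [qPochhammerInv_sub_one hq, zpow_add₀ hq₀ _ (τ * (N + τ))]
    linear_combination (q ^ (τ * (N + τ)) * qPochhammer q (N + i + j + k - τ) *
      qPochhammerInv q τ * qPochhammerInv q (i - τ) * qPochhammerInv q (j - τ) *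
      qPochhammerInv q (k + 1 - τ) * qPochhammerInv q (N + τ)) *
        saalschutz_factor_identity hq₀ N i j k τ

theorem finsum_saalschutzTerm_add_one (hq₀ : q ≠ 0) (hq : ¬ IsOfFinOrder q) (N i j : ℤ) {k : ℤ}
    (hk : 0 ≤ k) :
    (1 - q ^ (k + 1)) * (1 - q ^ (N + k + 1)) * ∑ᶠ τ, saalschutzTerm q N i j (k + 1) τ =
      (1 - q ^ (N + j + k + 1)) * (1 - q ^ (N + i + k + 1)) *
        ∑ᶠ τ, saalschutzTerm q N i j k τ := by
  rw [← sub_eq_zero, mul_finsum, mul_finsum, ← finsum_sub_distrib]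
  · simp only [saalschutzTerm_recurrence hq₀ hq hk]
    exact finsum_sub_add_one_eq_zero (hasFiniteSupport_saalschutzCompanion N i j k)
  · exact (hasFiniteSupport_saalschutzTerm N i j (k + 1)).mul_right _
  · exact (hasFiniteSupport_saalschutzTerm N i j k).mul_right _

theorem finsum_saalschutzTerm_zero (hq : ¬ IsOfFinOrder q) (N i j : ℤ) :
    ∑ᶠ τ, saalschutzTerm q N i j 0 τ = gaussBinom q (N + i + j) i * gaussBinom q (N + j) j := by
  rw [finsum_eq_single _ 0 fun τ hτ ↦ saalschutzTerm_eq_zero (by omega)]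
  have htop := qPochhammerInv_mul_gaussBinom hq (N + j) j
  rw [add_sub_cancel_right] at htop
  simp only [saalschutzTerm, zero_mul, zpow_zero, one_mul, add_zero, sub_zero,
    qPochhammerInv_zero, mul_one]
  rw [gaussBinom_eq_mul_qPochhammerInv (N + i + j), show N + i + j - i = N + j by ring]
  linear_combination -(qPochhammer q (N + i + j) * qPochhammerInv q i) * htop

theorem saalschutzProduct_eq_zero {N i j k : ℤ} (h : i < 0 ∨ j < 0 ∨ k < 0) :
    saalschutzProduct q N i j k = 0 := by
  unfold saalschutzProduct
  rcases h with h | h | h <;> simp [gaussBinom_eq_zero (Or.inl h)]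

theorem saalschutzProduct_neg (N i j k : ℤ) :
    saalschutzProduct q (-N) (i + N) (j + N) (k + N) = saalschutzProduct q N i j k := by
  simp only [saalschutzProduct, gaussBinom_eq_mul_qPochhammerInv]
  ring_nf

theorem saalschutzProduct_add_one (hq : ¬ IsOfFinOrder q) {N i j k : ℤ} (hjk : 0 ≤ N + j + k)
    (hik : 0 ≤ N + i + k) :
    (1 - q ^ (k + 1)) * (1 - q ^ (N + k + 1)) * saalschutzProduct q N i j (k + 1) =
      (1 - q ^ (N + j + k + 1)) * (1 - q ^ (N + i + k + 1)) * saalschutzProduct q N i j k := by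
  have hj := one_sub_zpow_mul_gaussBinom_add_one_left hq hjk j
  have hk := one_sub_zpow_mul_gaussBinom_add_one_add_one hq hik k
  rw [show N + j + k + 1 - j = N + k + 1 by ring] at hj
  rw [saalschutzProduct, saalschutzProduct, ← add_assoc, ← add_assoc]
  calc
    _ = gaussBinom q (N + i + j) i * ((1 - q ^ (N + k + 1)) * gaussBinom q (N + j + k + 1) j) *
          ((1 - q ^ (k + 1)) * gaussBinom q (N + i + k + 1) (k + 1)) := by ring
    _ = _ := by rw [hj, hk]; ring

theorem finsum_saalschutzTerm_of_nonneg (hq₀ : q ≠ 0) (hq : ¬ IsOfFinOrder q) {N : ℤ}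
    (hN : 0 ≤ N) (i j k : ℤ) :
    ∑ᶠ τ, saalschutzTerm q N i j k τ = saalschutzProduct q N i j k := by
  obtain h | ⟨hi, hj, hk⟩ : (i < 0 ∨ j < 0 ∨ k < 0) ∨ 0 ≤ i ∧ 0 ≤ j ∧ 0 ≤ k := by omega
  · rw [saalschutzProduct_eq_zero h]
    exact finsum_eq_zero_of_forall_eq_zero fun τ ↦ saalschutzTerm_eq_zero (by omega)
  induction k, hk using Int.leInduction with
  | base =>
    rw [finsum_saalschutzTerm_zero hq, saalschutzProduct, add_zero, add_zero,
      gaussBinom_zero_right hq (add_nonneg hN hi), mul_one]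
  | succ k hk ih =>
    have hne : (1 - q ^ (k + 1)) * (1 - q ^ (N + k + 1)) ≠ 0 :=
      mul_ne_zero (one_sub_zpow_ne_zero hq (by omega)) (one_sub_zpow_ne_zero hq (by omega))
    refine mul_left_cancel₀ hne ?_
    rw [finsum_saalschutzTerm_add_one hq₀ hq N i j hk, ih,
      saalschutzProduct_add_one hq (by omega) (by omega)]

theorem finsum_saalschutzTerm (hq₀ : q ≠ 0) (hq : ¬ IsOfFinOrder q) (N i j k : ℤ) :
    ∑ᶠ τ, saalschutzTerm q N i j k τ = saalschutzProduct q N i j k := by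
  rcases le_total 0 N with hN | hN
  · exact finsum_saalschutzTerm_of_nonneg hq₀ hq hN i j k
  · rw [← finsum_saalschutzTerm_neg, ← saalschutzProduct_neg]
    exact finsum_saalschutzTerm_of_nonneg hq₀ hq (neg_nonneg.2 hN) _ _ _

end Saalschutz

section Gollnitz

theorem two_mul_triZ (n : ℤ) : 2 * triZ n = n * (n + 1) :=
  Int.mul_ediv_cancel' (Int.even_mul_succ_self n).two_dvd

theorem gollnitz_exponent_eq (L i j k τ : ℤ) :
    τ * (L + 2) - triZ τ + triZ (i - τ) + triZ (j - τ) + triZ (k - τ) =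
      triZ i + triZ j + triZ k + τ * (L - i - j - k + τ) := by
  refine mul_left_cancel₀ (two_ne_zero (α := ℤ)) ?_
  linear_combination -two_mul_triZ τ + two_mul_triZ (i - τ) + two_mul_triZ (j - τ) +
    two_mul_triZ (k - τ) - two_mul_triZ i - two_mul_triZ j - two_mul_triZ k

theorem gaussBinom_mul_telescope (hq : ¬ IsOfFinOrder q) (m a b c d : ℤ) :
    gaussBinom q m a * gaussBinom q (m - a) b * gaussBinom q (m - a - b) c *
        gaussBinom q (m - a - b - c) d =
      qPochhammer q m * qPochhammerInv q a * qPochhammerInv q b * qPochhammerInv q c *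
        qPochhammerInv q d * qPochhammerInv q (m - a - b - c - d) := by
  have hb := qPochhammerInv_mul_gaussBinom hq (m - a) b
  have hc := qPochhammerInv_mul_gaussBinom hq (m - a - b) c
  have hd := qPochhammerInv_mul_gaussBinom hq (m - a - b - c) d
  rw [gaussBinom_eq_mul_qPochhammerInv m a]
  calc
    _ = qPochhammer q m * qPochhammerInv q a *
          (qPochhammerInv q (m - a) * gaussBinom q (m - a) b) *
          gaussBinom q (m - a - b) c * gaussBinom q (m - a - b - c) d := by ring
    _ = qPochhammer q m * qPochhammerInv q a * qPochhammerInv q b *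
          (qPochhammerInv q (m - a - b) * gaussBinom q (m - a - b) c) *
          gaussBinom q (m - a - b - c) d := by rw [hb]; ring
    _ = qPochhammer q m * qPochhammerInv q a * qPochhammerInv q b * qPochhammerInv q c *
          (qPochhammerInv q (m - a - b - c) * gaussBinom q (m - a - b - c) d) := by rw [hc]; ring
    _ = _ := by rw [hd]; ring

theorem gollnitz_summand_eq (hq₀ : q ≠ 0) (hq : ¬ IsOfFinOrder q) (L i j k τ : ℤ) :
    q ^ (τ * (L + 2) - triZ τ + triZ (i - τ) + triZ (j - τ) + triZ (k - τ)) *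
        gaussBinom q (L - τ) τ * gaussBinom q (L - 2 * τ) (i - τ) *
        gaussBinom q (L - i - τ) (j - τ) * gaussBinom q (L - i - j) (k - τ) =
      q ^ (triZ i + triZ j + triZ k) * saalschutzTerm q (L - i - j - k) i j k τ := by
  have htel := gaussBinom_mul_telescope hq (L - τ) τ (i - τ) (j - τ) (k - τ)
  rw [show L - τ - τ = L - 2 * τ by ring, show L - 2 * τ - (i - τ) = L - i - τ by ring,
    show L - i - τ - (j - τ) = L - i - j by ring,
    show L - i - j - (k - τ) = L - i - j - k + τ by ring] at htel
  rw [gollnitz_exponent_eq, zpow_add₀ hq₀, saalschutzTerm,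
    show L - i - j - k + i + j + k - τ = L - τ by ring]
  linear_combination q ^ (triZ i + triZ j + triZ k) * q ^ (τ * (L - i - j - k + τ)) * htel

theorem gollnitz_equal_bounds_identity_general (hq₀ : q ≠ 0) (hq : ¬ IsOfFinOrder q)
    (L i j k : ℤ) :
    ∑ τ ∈ Icc 0 (min i (min j k)),
      q ^ (τ * (L + 2) - triZ τ + triZ (i - τ) + triZ (j - τ) + triZ (k - τ)) *
        gaussBinom q (L - τ) τ * gaussBinom q (L - 2 * τ) (i - τ) *
        gaussBinom q (L - i - τ) (j - τ) * gaussBinom q (L - i - j) (k - τ) =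
    q ^ (triZ i + triZ j + triZ k) *
      (gaussBinom q (L - k) i * gaussBinom q (L - i) j * gaussBinom q (L - j) k) := by
  simp only [gollnitz_summand_eq hq₀ hq]
  rw [← mul_sum, ← finsum_eq_sum_of_support_subset _ (support_saalschutzTerm_subset _ i j k),
    finsum_saalschutzTerm hq₀ hq, saalschutzProduct,
    show L - i - j - k + i + j = L - k by ring,
    show L - i - j - k + j + k = L - i by ring, show L - i - j - k + i + k = L - j by ring]

end Gollnitz

/-- The `L = M` case of the double bounded Göllnitz identity, evaluated by the
q-Pfaff–Saalschütz summation: for `i, j, k ≥ 0` and `L ≥ i + j + k`,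
`∑_{τ=0}^{min(i,j,k)} q^{τ(L+2) - T_τ + T_{i-τ} + T_{j-τ} + T_{k-τ}}
    [L-τ; τ] [L-2τ; i-τ] [L-i-τ; j-τ] [L-i-j; k-τ]
  = q^{T_i+T_j+T_k} [L-k; i] [L-i; j] [L-j; k]`. -/
theorem gollnitz_equal_bounds_identity (L i j k : ℤ)
    (hi : 0 ≤ i) (hj : 0 ≤ j) (hk : 0 ≤ k) (hL : i + j + k ≤ L) :
    ∑ τ ∈ Finset.Icc (0 : ℤ) (min i (min j k)),
      (RatFunc.X : RatFunc ℚ) ^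
          (τ * (L + 2) - triZ τ + triZ (i - τ) + triZ (j - τ) + triZ (k - τ)) *
        qbin (L - τ) τ * qbin (L - 2 * τ) (i - τ) * qbin (L - i - τ) (j - τ) *
        qbin (L - i - j) (k - τ) =
    (RatFunc.X : RatFunc ℚ) ^ (triZ i + triZ j + triZ k) *
      (qbin (L - k) i * qbin (L - i) j * qbin (L - j) k) :=
  gollnitz_equal_bounds_identity_general RatFunc.X_ne_zero not_isOfFinOrder_ratFunc_X L i j k
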